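/- Let V be a vertex of 𝔸, let C be a closed Weyl chamber, and let E, E' be edges of 𝔸 with V ⊆ E, V ⊆ E', E ⊆ V + C and E' ⊆ V + C. If E and E' have the same type (i.e. lie in the same orbit of the affine Weyl group W^a), then E = E'. (This is the key step in the paper's uniqueness proof: a sector contains at most one edge of each type emanating from its vertex.) -/

import Mathlib

open Pointwise

variable {A : Type*} [NormedAddCommGroup A] [NormedSpace ℝ A]

/-- The three possible half-space choices `H_{β,n}`, `H⁺_{β,n}`, `H⁻_{β,n}`
attached to an affine root `(β, n)`. -/
def halfChoice (β : A →ₗ[ℝ] ℝ) (m : ℤ) (c : Fin 3) : Set A :=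
  if c = 0 then {x | β x + (m : ℝ) = 0}
  else if c = 1 then {x | 0 ≤ β x + (m : ℝ)}
  else {x | β x + (m : ℝ) ≤ 0}

/-- A face of the apartment: a nonempty intersection, over all pairs `(β, n) ∈ Φ⁺ × ℤ`, of a
choice of the wall `H_{β,n}` or one of the two closed half-spaces it bounds. -/
def IsFace (pos : Finset (A →ₗ[ℝ] ℝ)) (F : Set A) : Prop :=
  F.Nonempty ∧ ∃ σ : (A →ₗ[ℝ] ℝ) → ℤ → Fin 3,
    F = ⋂ β ∈ (pos : Set (A →ₗ[ℝ] ℝ)), ⋂ m : ℤ, halfChoice β m (σ β m)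

/-- The dimension of a face: the dimension of its affine span. -/
noncomputable def faceDim (F : Set A) : ℕ := Module.finrank ℝ (affineSpan ℝ F).direction

/-- A vertex: a face of dimension zero. -/
def IsVertexFace (pos : Finset (A →ₗ[ℝ] ℝ)) (F : Set A) : Prop :=
  IsFace pos F ∧ faceDim F = 0

/-- An edge: a face of dimension one. -/
def IsEdgeFace (pos : Finset (A →ₗ[ℝ] ℝ)) (F : Set A) : Prop :=
  IsFace pos F ∧ faceDim F = 1

/-- A point `x` is special if `α(x) ∈ ℤ` for all roots `α ∈ Φ`. -/
def IsSpecialPt (Φ : Finset (A →ₗ[ℝ] ℝ)) (x : A) : Prop :=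
  ∀ α ∈ Φ, ∃ m : ℤ, α x = (m : ℝ)

/-- The affine Weyl group: the group of affine transformations of the apartment generated by
the affine reflections `s_{α,n} : x ↦ x − (α(x)+n)·α∨`. -/
def affWeyl (Φ : Finset (A →ₗ[ℝ] ℝ)) (cor : (A →ₗ[ℝ] ℝ) → A) : Subgroup (A ≃ᵃ[ℝ] A) :=
  Subgroup.closure {g | ∃ α ∈ Φ, ∃ m : ℤ, ∀ x, g x = x - (α x + (m : ℝ)) • cor α}

/-- Two faces have the same type if they lie in the same orbit of the affine Weyl group. -/
def SameType (Φ : Finset (A →ₗ[ℝ] ℝ)) (cor : (A →ₗ[ℝ] ℝ) → A) (F F' : Set A) : Prop :=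
  ∃ g ∈ affWeyl Φ cor, g '' F = F'

/-- The union of the walls through the origin. -/
def wallsSet (Φ : Finset (A →ₗ[ℝ] ℝ)) : Set A :=
  ⋃ α ∈ (Φ : Set (A →ₗ[ℝ] ℝ)), {x | α x = 0}

/-- A closed Weyl chamber: the closure of a connected component of the complement of the
union of the walls through the origin. -/
def IsWeylChamber (Φ : Finset (A →ₗ[ℝ] ℝ)) (C : Set A) : Prop :=
  ∃ x ∈ (wallsSet Φ)ᶜ, C = closure (connectedComponentIn (wallsSet Φ)ᶜ x)

/-- The stabilizer in the affine Weyl group of a face `F`. -/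
def faceStab (Φ : Finset (A →ₗ[ℝ] ℝ)) (cor : (A →ₗ[ℝ] ℝ) → A) (F : Set A) :
    Subgroup (A ≃ᵃ[ℝ] A) where
  carrier := {g | g ∈ affWeyl Φ cor ∧ g '' F = F}
  one_mem' := ⟨Subgroup.one_mem _, by simp⟩
  mul_mem' := by
    rintro a b ⟨ha, ha'⟩ ⟨hb, hb'⟩
    refine ⟨mul_mem ha hb, ?_⟩
    have h : ⇑(a * b) = ⇑a ∘ ⇑b := rfl
    rw [h, Set.image_comp, hb', ha']
  inv_mem' := by
    rintro a ⟨ha, ha'⟩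
    refine ⟨inv_mem ha, ?_⟩
    have h1 : ⇑(a⁻¹) '' (⇑a '' F) = ⇑(a⁻¹) '' F := by rw [ha']
    rw [← Set.image_comp,
      show ⇑(a⁻¹) ∘ ⇑a = id from funext fun x => by
        simp [AffineEquiv.inv_def],
      Set.image_id] at h1
    exact h1.symm

/-- A one-skeleton gallery `(V_0 ⊆ E_0 ⊇ V_1 ⊆ ⋯ ⊇ V_r ⊆ E_r ⊇ V_{r+1})` in the apartment:
the `V_i` are vertices, `V_0` and `V_{r+1}` are special, and the `E_i` are edges. -/
structure OneSkelGallery (A : Type*) [NormedAddCommGroup A] [NormedSpace ℝ A]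
    (Φ pos : Finset (A →ₗ[ℝ] ℝ)) (r : ℕ) where
  V : Fin (r + 2) → Set A
  E : Fin (r + 1) → Set A
  vertex_V : ∀ i, IsVertexFace pos (V i)
  edge_E : ∀ i, IsEdgeFace pos (E i)
  special_source : ∀ x ∈ V 0, IsSpecialPt Φ x
  special_target : ∀ x ∈ V (Fin.last (r + 1)), IsSpecialPt Φ x
  subset_left : ∀ i : Fin (r + 1), V i.castSucc ⊆ E i
  subset_right : ∀ i : Fin (r + 1), V i.succ ⊆ E i

/-!
For the inner product `∑ α ∈ Φ, α x * α y` the affine Weyl group is generated by orthogonal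
reflections whose mirrors form a locally finite arrangement, stable under conjugation. Such a group
is generated by the reflections in the walls of any one chamber: among the reflections missing from
the subgroup these generate, take one whose mirror is nearest to a point `p` of the chamber; if
another mirror separates `p` from its image, it is a product of reflections in nearer mirrors.
The exchange argument on words in these generators shows that no element moves a point of a closed
chamber to another point of that chamber, so `g x = x` as soon as no mirror separates `x` from
`g x`. When `g` fixes `v`, only the mirrors through `v` matter, by shrinking `x` towards `v`.

Now let `g E = E'`. Both `v` and `g v` lie in the face `E'`, so no mirror separates them and
`g v = v`. For `x ∈ E`, both `x` and `g x` lie in `v + C`, so no mirror through `v` separates them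
and `g x = x`. Hence `E' = g E = E`.
-/

section Reflections

open Filter
open scoped RealInnerProductSpace Topology

variable {V : Type*} [NormedAddCommGroup V] [InnerProductSpace ℝ V]

/-- `r` is the orthogonal reflection in the hyperplane `h = 0`. The normal vector `n` need not be
a unit vector: the affine function `h` is scaled against it, as a root is against its coroot. -/
structure IsReflectionAlong (r : V ≃ᵃ[ℝ] V) (n : V) (h : V →ᵃ[ℝ] ℝ) : Prop where
  normal_ne_zero : n ≠ 0
  two_mul_inner_normal : ∀ x, 2 * ⟪n, x⟫ = ‖n‖ ^ 2 * h.linear x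
  apply_eq : ∀ x, r x = x - h x • n

/-- `r` is an orthogonal reflection in some affine hyperplane. -/
def IsHyperplaneReflection (r : V ≃ᵃ[ℝ] V) : Prop :=
  ∃ n h, IsReflectionAlong r n h

/-- The mirror of the reflection `r` lies strictly between `x` and `y`. Phrasing this through
distances makes it invariant under isometries without reference to an equation of the mirror. -/
def Separates (r : V ≃ᵃ[ℝ] V) (x y : V) : Prop :=
  dist (r x) y < dist x y

theorem separates_apply_self {r : V ≃ᵃ[ℝ] V} {x : V} (hx : r x ≠ x) : Separates r x (r x) := by
  rw [Separates, dist_self]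
  exact dist_pos.mpr hx.symm

theorem not_separates_self (r : V ≃ᵃ[ℝ] V) (x : V) : ¬Separates r x x := by
  rw [Separates, dist_self]
  exact dist_nonneg.not_gt

theorem Separates.apply_left_ne {r : V ≃ᵃ[ℝ] V} {x y : V} (hxy : Separates r x y) : r x ≠ x :=
  fun h => hxy.ne (congrArg (dist · y) h)

namespace IsReflectionAlong

variable {r : V ≃ᵃ[ℝ] V} {n : V} {h : V →ᵃ[ℝ] ℝ}

theorem linear_normal (hr : IsReflectionAlong r n h) : h.linear n = 2 := by
  have hn : ‖n‖ ^ 2 ≠ 0 := pow_ne_zero 2 (norm_ne_zero_iff.mpr hr.normal_ne_zero)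
  have key := hr.two_mul_inner_normal n
  rw [real_inner_self_eq_norm_sq, mul_comm] at key
  exact (mul_left_cancel₀ hn key).symm

theorem eq_neg_of_apply (hr : IsReflectionAlong r n h) (x : V) : h (r x) = -h x := by
  have hsub : h (r x) = h.linear (r x - x) + h x := by
    rw [← vsub_eq_sub, h.linearMap_vsub, vsub_eq_sub, sub_add_cancel]
  rw [hsub, hr.apply_eq, sub_sub_cancel_left, map_neg, map_smul, hr.linear_normal, smul_eq_mul]
  ring

theorem apply_apply (hr : IsReflectionAlong r n h) (x : V) : r (r x) = x := by
  rw [hr.apply_eq (r x), hr.eq_neg_of_apply, hr.apply_eq x]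
  module

theorem apply_eq_self_iff (hr : IsReflectionAlong r n h) {x : V} : r x = x ↔ h x = 0 := by
  rw [hr.apply_eq, sub_eq_self, smul_eq_zero, or_iff_left hr.normal_ne_zero]

theorem dist_sq (hr : IsReflectionAlong r n h) (x y : V) :
    dist (r x) y ^ 2 = dist x y ^ 2 + ‖n‖ ^ 2 * (h x * h y) := by
  have hinner : 2 * ⟪x - y, n⟫ = ‖n‖ ^ 2 * (h x - h y) := by
    rw [real_inner_comm, hr.two_mul_inner_normal, ← vsub_eq_sub x, h.linearMap_vsub, vsub_eq_sub]
  rw [dist_eq_norm, dist_eq_norm, hr.apply_eq, sub_right_comm, norm_sub_sq_real, norm_smul,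
    real_inner_smul_right, mul_pow, Real.norm_eq_abs, sq_abs]
  linear_combination (-h x) * hinner

theorem separates_iff (hr : IsReflectionAlong r n h) {x y : V} :
    Separates r x y ↔ h x * h y < 0 := by
  have hn : 0 < ‖n‖ ^ 2 := pow_pos (norm_pos_iff.mpr hr.normal_ne_zero) 2
  rw [Separates, ← sq_lt_sq₀ dist_nonneg dist_nonneg, hr.dist_sq, add_lt_iff_neg_left,
    ← smul_eq_mul, smul_neg_iff_of_pos_left hn]

theorem dist_apply_le_iff (hr : IsReflectionAlong r n h) {x y : V} :
    dist (r x) y ≤ dist x y ↔ h x * h y ≤ 0 := by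
  have hn : 0 < ‖n‖ ^ 2 := pow_pos (norm_pos_iff.mpr hr.normal_ne_zero) 2
  rw [← sq_le_sq₀ dist_nonneg dist_nonneg, hr.dist_sq, add_le_iff_nonpos_right,
    mul_nonpos_iff_pos_imp_nonpos]
  constructor
  · exact fun H => H.1 hn
  · exact fun H => ⟨fun _ => H, fun _ => hn.le⟩

theorem dist_map (hr : IsReflectionAlong r n h) (x y : V) : dist (r x) (r y) = dist x y := by
  have hsq : dist (r x) (r y) ^ 2 = dist x y ^ 2 := by
    rw [hr.dist_sq, dist_comm x, hr.dist_sq, hr.eq_neg_of_apply, dist_comm y]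
    ring
  exact (sq_eq_sq₀ dist_nonneg dist_nonneg).mp hsq

end IsReflectionAlong

theorem affineMap_apply_midpoint {E : Type*} [AddCommGroup E] [Module ℝ E] (h : E →ᵃ[ℝ] ℝ)
    (x y : E) : h (midpoint ℝ x y) = (h x + h y) / 2 := by
  rw [AffineMap.map_midpoint, midpoint_eq_smul_add, smul_eq_mul, invOf_eq_inv]
  ring

namespace IsHyperplaneReflection

variable {r s : V ≃ᵃ[ℝ] V}

theorem apply_apply (hr : IsHyperplaneReflection r) (x : V) : r (r x) = x := by
  obtain ⟨n, h, hr⟩ := hr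
  exact hr.apply_apply x

theorem mul_self (hr : IsHyperplaneReflection r) : r * r = 1 :=
  AffineEquiv.ext hr.apply_apply

theorem inv_eq (hr : IsHyperplaneReflection r) : r⁻¹ = r :=
  inv_eq_of_mul_eq_one_left hr.mul_self

theorem dist_map (hr : IsHyperplaneReflection r) (x y : V) : dist (r x) (r y) = dist x y := by
  obtain ⟨n, h, hr⟩ := hr
  exact hr.dist_map x y

theorem dist_apply_left (hr : IsHyperplaneReflection r) (x y : V) :
    dist (r x) y = dist x (r y) := by
  rw [← hr.dist_map x, hr.apply_apply]

theorem apply_midpoint_self (hr : IsHyperplaneReflection r) (x : V) :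
    r (midpoint ℝ x (r x)) = midpoint ℝ x (r x) := by
  rw [AffineEquiv.map_midpoint, hr.apply_apply, midpoint_comm]

theorem separates_comm (hr : IsHyperplaneReflection r) {x y : V} :
    Separates r x y ↔ Separates r y x := by
  rw [Separates, Separates, hr.dist_apply_left, dist_comm, dist_comm x]

theorem dist_apply_le_or_of_separates (hr : IsHyperplaneReflection r) {x y : V}
    (hxy : Separates r x y) (z : V) : dist (r x) z ≤ dist x z ∨ dist (r y) z ≤ dist y z := by
  obtain ⟨n, h, hr⟩ := hr
  rw [hr.separates_iff] at hxy
  rw [hr.dist_apply_le_iff, hr.dist_apply_le_iff]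
  by_contra! hz
  nlinarith [mul_pos hz.1 hz.2, sq_nonneg (h z)]

theorem separates_of_not_separates (hr : IsHyperplaneReflection r) {x y z : V}
    (hxz : Separates r x z) (hxy : ¬Separates r x y) (hy : r y ≠ y) : Separates r y z := by
  obtain ⟨n, h, hr⟩ := hr
  rw [hr.separates_iff] at *
  rw [Ne, hr.apply_eq_self_iff] at hy
  rcases lt_or_gt_of_ne hy with hy | hy <;> rcases mul_neg_iff.mp hxz with hxz | hxz <;> nlinarith

theorem separates_midpoint (hr : IsHyperplaneReflection r) {p x y : V}
    (hpx : Separates r p x) (hxy : ¬Separates r x y) : Separates r p (midpoint ℝ x y) := by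
  obtain ⟨n, h, hr⟩ := hr
  rw [hr.separates_iff] at *
  rw [affineMap_apply_midpoint]
  rcases mul_neg_iff.mp hpx with hpx | hpx <;> nlinarith

theorem separates_lineMap_iff (hr : IsHyperplaneReflection r) {v : V} (hv : r v = v) {ε : ℝ}
    (hε : 0 < ε) {x y : V} :
    Separates r (AffineMap.lineMap v x ε) (AffineMap.lineMap v y ε) ↔ Separates r x y := by
  obtain ⟨n, h, hr⟩ := hr
  have hline (z : V) : h (AffineMap.lineMap v z ε) = ε * h z := by
    rw [AffineMap.apply_lineMap, hr.apply_eq_self_iff.mp hv, AffineMap.lineMap_apply]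
    simp
  rw [hr.separates_iff, hr.separates_iff, hline, hline, mul_mul_mul_comm,
    ← smul_eq_mul, smul_neg_iff_of_pos_left (mul_pos hε hε)]

/-- A reflection is determined by a single displacement, `r x - x` being the multiple of `r p - p`
that can be read off from distances. -/
theorem norm_sq_smul_sub (hr : IsHyperplaneReflection r) (p x : V) :
    dist p (r p) ^ 2 • (x - r x) = (dist (r p) x ^ 2 - dist p x ^ 2) • (p - r p) := by
  obtain ⟨n, h, hr⟩ := hr
  rw [hr.dist_sq p x, dist_eq_norm, hr.apply_eq, hr.apply_eq, sub_sub_cancel, sub_sub_cancel,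
    norm_smul, mul_pow, Real.norm_eq_abs, sq_abs]
  module

theorem eq_of_apply_eq (hr : IsHyperplaneReflection r) (hs : IsHyperplaneReflection s) {p : V}
    (hp : r p ≠ p) (hrs : r p = s p) : r = s := by
  ext x
  have hd : dist p (r p) ^ 2 ≠ 0 := pow_ne_zero 2 (dist_ne_zero.mpr hp.symm)
  have hx := hr.norm_sq_smul_sub p x
  rw [hrs, ← hs.norm_sq_smul_sub p x, ← hrs] at hx
  exact sub_right_injective (smul_right_injective V hd hx)

end IsHyperplaneReflection

/-- A family of reflections whose mirrors form a locally finite arrangement, stable under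
conjugation. -/
structure IsReflectionArrangement (R : Set (V ≃ᵃ[ℝ] V)) : Prop where
  isHyperplaneReflection : ∀ r ∈ R, IsHyperplaneReflection r
  conj_mem : ∀ r ∈ R, ∀ s ∈ R, s * r * s⁻¹ ∈ R
  finite_setOf_dist_le : ∀ p d, {r ∈ R | dist p (r p) ≤ d}.Finite

/-- `p` lies on no mirror of the arrangement `R`. -/
def IsRegularPoint (R : Set (V ≃ᵃ[ℝ] V)) (p : V) : Prop :=
  ∀ r ∈ R, r p ≠ p

/-- For a regular point `p`, the closed chamber of the arrangement `R` that contains `p`: the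
points which no mirror separates from `p`. -/
def closedChamber (R : Set (V ≃ᵃ[ℝ] V)) (p : V) : Set V :=
  {x | ∀ r ∈ R, ¬Separates r p x}

/-- `r` is a reflection in a wall of the chamber of `p`: its own mirror is the only one that
separates `p` from `r p`. -/
def IsSimpleReflection (R : Set (V ≃ᵃ[ℝ] V)) (p : V) (r : V ≃ᵃ[ℝ] V) : Prop :=
  r ∈ R ∧ ∀ s ∈ R, Separates s p (r p) → s = r

theorem separates_conj_iff {r g : V ≃ᵃ[ℝ] V} (hg : ∀ x y, dist (g x) (g y) = dist x y) {x y : V} :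
    Separates (g * r * g⁻¹) (g x) (g y) ↔ Separates r x y := by
  have happly : (g * r * g⁻¹) (g x) = g (r x) := by
    simp [AffineEquiv.inv_def]
  rw [Separates, Separates, happly, hg, hg]

namespace IsHyperplaneReflection

variable {k t : V ≃ᵃ[ℝ] V}

/-- The displacement vector `x - t x` is normal to the mirror, so up to a sign it is determined by
its length. -/
theorem eq_or_eq_apply_of_midpoint_eq (ht : IsHyperplaneReflection t) {p x : V}
    (hmid : midpoint ℝ x (t x) = midpoint ℝ p (t p)) (hdist : dist x (t x) = dist p (t p)) :
    x = p ∨ x = t p := by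
  obtain ⟨n, h, ht⟩ := ht
  have hn : ‖n‖ ≠ 0 := norm_ne_zero_iff.mpr ht.normal_ne_zero
  have hmidpoint (z : V) : midpoint ℝ z (t z) = z - (h z / 2) • n := by
    rw [midpoint_eq_smul_add, ht.apply_eq, invOf_eq_inv]
    module
  have habs : h x = h p ∨ h x = -h p := by
    simpa only [dist_eq_norm, ht.apply_eq, sub_sub_cancel, norm_smul, Real.norm_eq_abs,
      mul_eq_mul_right_iff, or_iff_left hn, abs_eq_abs] using hdist
  have hx : x = p - (h p / 2) • n + (h x / 2) • n := by
    rw [← hmidpoint p, ← hmid, hmidpoint x, sub_add_cancel]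
  rw [ht.apply_eq]
  rcases habs with habs | habs <;> rw [habs] at hx
  · exact Or.inl (hx.trans (sub_add_cancel _ _))
  · exact Or.inr (hx.trans (by module))

/-- All four of `p`, `t p`, `k p` and `t (k p)` lie in the ball with diameter `p`, `t p`. -/
theorem dist_lt_of_dist_midpoint_le (hk : IsHyperplaneReflection k)
    (ht : IsHyperplaneReflection t) (hne : k ≠ t) {p : V} (hkp : k p ≠ p)
    (hle : dist (k p) (midpoint ℝ p (t p)) ≤ dist p (midpoint ℝ p (t p))) :
    dist p (k p) < dist p (t p) ∧ dist p ((k * t * k⁻¹) p) < dist p (t p) := by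
  set m := midpoint ℝ p (t p) with hm
  have htm : t m = m := ht.apply_midpoint_self p
  have hpm : dist p m = dist p (t p) / 2 := by
    rw [hm, dist_left_midpoint, Real.norm_two]
    ring
  have hktkp : dist p ((k * t * k⁻¹) p) = dist (k p) (t (k p)) := by
    rw [hk.inv_eq, AffineEquiv.coe_mul, AffineEquiv.coe_mul, Function.comp_apply,
      Function.comp_apply, hk.dist_apply_left]
  have hmtkp : dist m (t (k p)) = dist (k p) m := by
    rw [← ht.dist_apply_left, htm, dist_comm]
  have hkm : k p ≠ t p := fun h => hne (hk.eq_of_apply_eq ht hkp h)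
  constructor
  · by_contra! hge
    have htri := dist_triangle_right p (k p) m
    have hmid : m = midpoint ℝ p (k p) :=
      eq_midpoint_of_dist_eq_half (by linarith) (by rw [dist_comm]; linarith)
    have hvsub := (midpoint_eq_midpoint_iff_vsub_eq_vsub ℝ).mp (hm.symm.trans hmid)
    rw [vsub_self, eq_comm, vsub_eq_zero_iff_eq] at hvsub
    exact hkm hvsub
  · rw [hktkp]
    by_contra! hge
    have htri := dist_triangle (k p) m (t (k p))
    have hmid : m = midpoint ℝ (k p) (t (k p)) :=
      eq_midpoint_of_dist_eq_half (by linarith) (by linarith)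
    rcases ht.eq_or_eq_apply_of_midpoint_eq hmid.symm (by linarith) with h | h
    exacts [hkp h, hkm h]

end IsHyperplaneReflection

theorem lineMap_right_injective {E : Type*} [AddCommGroup E] [Module ℝ E] (q : E) {ε : ℝ}
    (hε : ε ≠ 0) : Function.Injective fun x => AffineMap.lineMap q x ε := by
  intro x y hxy
  simpa only [AffineMap.lineMap_apply, vsub_eq_sub, vadd_eq_add, add_left_inj, sub_left_inj,
    smul_right_inj hε] using hxy

namespace IsReflectionArrangement

variable {R : Set (V ≃ᵃ[ℝ] V)}

theorem dist_map (hR : IsReflectionArrangement R) {g : V ≃ᵃ[ℝ] V} (hg : g ∈ Subgroup.closure R)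
    (x y : V) : dist (g x) (g y) = dist x y := by
  induction hg using Subgroup.closure_induction generalizing x y with
  | mem r hr => exact (hR.isHyperplaneReflection r hr).dist_map x y
  | one => rfl
  | mul g h _ _ hg hh =>
    rw [AffineEquiv.coe_mul, Function.comp_apply, Function.comp_apply, hg, hh]
  | inv g _ hg => rw [← hg, AffineEquiv.inv_def, g.apply_symm_apply, g.apply_symm_apply]

theorem conj_mem_of_mem_closure (hR : IsReflectionArrangement R) {r g : V ≃ᵃ[ℝ] V} (hr : r ∈ R)
    (hg : g ∈ Subgroup.closure R) : g * r * g⁻¹ ∈ R := by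
  have hle : Subgroup.closure R ≤ Subgroup.normalizer R := by
    refine (Subgroup.closure_le _).mpr fun s hs => Subgroup.mem_set_normalizer_iff.mpr fun h => ?_
    refine ⟨fun hh => hR.conj_mem h hh s hs, fun hh => ?_⟩
    have hmem := hR.conj_mem _ hh s hs
    have hinv := (hR.isHyperplaneReflection s hs).inv_eq
    have hmul := (hR.isHyperplaneReflection s hs).mul_self
    rwa [hinv, mul_assoc, mul_assoc, hmul, mul_one, ← mul_assoc, hmul, one_mul] at hmem
  exact (Subgroup.mem_set_normalizer_iff.mp (hle hg) r).mp hr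

/-- The witness `k` is `s` or `t * s * t⁻¹`, according to the side of the mirror of `s` on which the
midpoint of `p` and `t p` lies. -/
theorem exists_dist_lt_of_separates (hR : IsReflectionArrangement R) {s t : V ≃ᵃ[ℝ] V} (hs : s ∈ R)
    (ht : t ∈ R) (hne : s ≠ t) {p : V} (hst : Separates s p (t p)) :
    ∃ k ∈ R, dist p (k p) < dist p (t p) ∧ dist p ((k * t * k⁻¹) p) < dist p (t p) := by
  have hrs := hR.isHyperplaneReflection s hs
  have hrt := hR.isHyperplaneReflection t ht
  rcases hrs.dist_apply_le_or_of_separates hst (midpoint ℝ p (t p)) with hle | hle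
  · exact ⟨s, hs, hrs.dist_lt_of_dist_midpoint_le hrt hne hst.apply_left_ne hle⟩
  · have hk := hR.conj_mem s hs t ht
    have hrk := hR.isHyperplaneReflection _ hk
    refine ⟨t * s * t⁻¹, hk, hrk.dist_lt_of_dist_midpoint_le hrt ?_ ?_ ?_⟩
    · exact fun h => hne (mul_left_cancel (mul_inv_eq_iff_eq_mul.mp h))
    · have htp := (hrs.separates_comm.mp hst).apply_left_ne
      rw [hrt.inv_eq]
      intro h
      exact htp (by simpa [hrt.apply_apply] using congrArg t h)
    · rw [hrt.inv_eq]
      simp only [AffineEquiv.coe_mul, Function.comp_apply]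
      rwa [hrt.dist_apply_left, hrt.apply_midpoint_self, dist_left_midpoint_eq_dist_right_midpoint]

theorem closure_isSimpleReflection (hR : IsReflectionArrangement R) (p : V) :
    Subgroup.closure {r | IsSimpleReflection R p r} = Subgroup.closure R := by
  set S := Subgroup.closure {r | IsSimpleReflection R p r}
  refine le_antisymm (Subgroup.closure_mono fun r hr => hr.1) ((Subgroup.closure_le S).mpr ?_)
  intro t₀ ht₀
  by_contra ht₀S
  have hfin : {t | (t ∈ R ∧ dist p (t p) ≤ dist p (t₀ p)) ∧ t ∉ S}.Finite :=
    (hR.finite_setOf_dist_le p (dist p (t₀ p))).subset fun t ht => ht.1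
  obtain ⟨t, ⟨⟨htR, htle⟩, htS⟩, hmin⟩ :=
    hfin.exists_minimalFor (fun t => dist p (t p)) _ ⟨t₀, ⟨ht₀, le_rfl⟩, ht₀S⟩
  have hlt_mem : ∀ k ∈ R, dist p (k p) < dist p (t p) → k ∈ S := by
    intro k hkR hk
    by_contra hkS
    exact hk.not_ge (hmin ⟨⟨hkR, hk.le.trans htle⟩, hkS⟩ hk.le)
  obtain ⟨s, hsR, hst, hne⟩ : ∃ s ∈ R, Separates s p (t p) ∧ s ≠ t := by
    by_contra! hsimple
    exact htS (Subgroup.subset_closure ⟨htR, hsimple⟩)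
  obtain ⟨k, hkR, hk, hkt⟩ := hR.exists_dist_lt_of_separates hsR htR hne hst
  have hkS := hlt_mem k hkR hk
  have hktS := hlt_mem _ (hR.conj_mem t htR k hkR) hkt
  exact htS (by simpa [mul_assoc] using S.mul_mem (S.mul_mem (S.inv_mem hkS) hktS) hkS)

theorem exists_list_isSimpleReflection (hR : IsReflectionArrangement R) (p : V) {g : V ≃ᵃ[ℝ] V}
    (hg : g ∈ Subgroup.closure R) :
    ∃ l : List (V ≃ᵃ[ℝ] V), (∀ r ∈ l, IsSimpleReflection R p r) ∧ l.prod = g := by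
  rw [← hR.closure_isSimpleReflection p, ← Subgroup.mem_toSubmonoid,
    Subgroup.closure_toSubmonoid] at hg
  obtain ⟨l, hl, hlg⟩ := Submonoid.exists_list_of_mem_closure hg
  refine ⟨l, fun r hr => (hl r hr).elim id fun hr' => ?_, hlg⟩
  rw [← inv_inv r, (hR.isHyperplaneReflection _ hr'.1).inv_eq]
  exact hr'

theorem exists_shorter_list_of_separates (hR : IsReflectionArrangement R) {p : V}
    (hp : IsRegularPoint R p) {l : List (V ≃ᵃ[ℝ] V)} (hl : ∀ r ∈ l, IsSimpleReflection R p r)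
    {t : V ≃ᵃ[ℝ] V} (ht : t ∈ R) (htl : Separates t p (l.prod p)) :
    ∃ l' : List (V ≃ᵃ[ℝ] V),
      (∀ r ∈ l', IsSimpleReflection R p r) ∧ l'.length < l.length ∧ l'.prod = t * l.prod := by
  induction l generalizing t with
  | nil => exact absurd htl (not_separates_self t p)
  | cons s l ih =>
    obtain ⟨hs, hl⟩ := List.forall_mem_cons.mp hl
    have hrt := hR.isHyperplaneReflection t ht
    have hrs := hR.isHyperplaneReflection s hs.1
    by_cases hts : Separates t p (s p)
    · refine ⟨l, hl, l.length.lt_succ_self, ?_⟩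
      rw [hs.2 t ht hts, List.prod_cons, ← mul_assoc, hrs.mul_self, one_mul]
    · have hkR : s⁻¹ * t * s ∈ R := by
        simpa only [inv_inv] using
          hR.conj_mem_of_mem_closure ht (Subgroup.inv_mem _ (Subgroup.subset_closure hs.1))
      have hk : Separates (s⁻¹ * t * s) p (l.prod p) := by
        rw [← separates_conj_iff hrs.dist_map]
        have hsp : t (s p) ≠ s p := fun h => hp _ hkR (by simp [h, AffineEquiv.inv_def])
        simpa [mul_assoc] using hrt.separates_of_not_separates htl hts hsp
      obtain ⟨l', hl', hlen, hprod⟩ := ih hl hkR hk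
      refine ⟨s :: l', List.forall_mem_cons.mpr ⟨hs, hl'⟩, by simpa using hlen, ?_⟩
      simp [hprod, mul_assoc]

theorem eq_of_list_prod_apply_eq (hR : IsReflectionArrangement R) {p : V}
    (hp : IsRegularPoint R p) {x y : V} (hx : x ∈ closedChamber R p) (hy : y ∈ closedChamber R p)
    {l : List (V ≃ᵃ[ℝ] V)} (hl : ∀ r ∈ l, IsSimpleReflection R p r) (hxy : l.prod x = y) :
    x = y := by
  induction hn : l.length using Nat.strong_induction_on generalizing l with
  | _ n ih =>
  subst hn
  rcases l with _ | ⟨s, l⟩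
  · exact hxy
  obtain ⟨hs, hl⟩ := List.forall_mem_cons.mp hl
  have hrs := hR.isHyperplaneReflection s hs.1
  by_cases hsl : Separates s p (l.prod p)
  · obtain ⟨l', hl', hlen, hprod⟩ := hR.exists_shorter_list_of_separates hp hl hs.1 hsl
    exact ih l'.length (hlen.trans l.length.lt_succ_self) hl' (by rw [hprod, ← hxy]; rfl) rfl
  · have hlx : l.prod x = s y := by
      rw [← hxy, List.prod_cons, AffineEquiv.coe_mul, Function.comp_apply, hrs.apply_apply]
    suffices hsy : s y = y from ih l.length l.length.lt_succ_self hl (hlx.trans hsy) rfl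
    by_contra hsy
    have hsy_sep : Separates s p (s y) :=
      hrs.separates_of_not_separates (separates_apply_self hsy)
        (hrs.separates_comm.not.mp (hy s hs.1)) (hp s hs.1)
    have hw : l.prod ∈ Subgroup.closure R :=
      Subgroup.list_prod_mem _ fun r hr => Subgroup.subset_closure (hl r hr).1
    have hk : l.prod⁻¹ * s * l.prod ∈ R := by
      simpa only [inv_inv] using hR.conj_mem_of_mem_closure hs.1 (Subgroup.inv_mem _ hw)
    have hslp : s (l.prod p) ≠ l.prod p :=
      fun h => hp _ hk (by simp [h, AffineEquiv.inv_def])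
    have hsep := hrs.separates_of_not_separates hsy_sep hsl hslp
    rw [← hlx] at hsep
    refine hx _ hk ((separates_conj_iff (hR.dist_map hw)).mp ?_)
    simpa [mul_assoc] using hsep

theorem eventually_not_separates (hR : IsReflectionArrangement R) (q : V) :
    ∀ᶠ z in 𝓝 q, ∀ r ∈ R, r q ≠ q → r z ≠ z ∧ ¬Separates r q z := by
  have hball : ∀ᶠ z in 𝓝 q, ∀ r ∈ R, r q ≠ q → 2 * dist z q < dist q (r q) := by
    have hlt (c : ℝ) (hc : 0 < c) : ∀ᶠ z in 𝓝 q, 2 * dist z q < c := by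
      have hcont : Continuous fun z => 2 * dist z q := by fun_prop
      exact hcont.continuousAt.eventually_lt_const (by simpa using hc)
    have hnear : ∀ᶠ z in 𝓝 q, ∀ r ∈ {r ∈ R | dist q (r q) ≤ 1},
        r q ≠ q → 2 * dist z q < dist q (r q) := by
      refine (hR.finite_setOf_dist_le q 1).eventually_all.mpr fun r _ => ?_
      exact eventually_imp_distrib_left.mpr fun hrq => hlt _ (dist_pos.mpr hrq.symm)
    filter_upwards [hlt 1 one_pos, hnear] with z hz hz' r hr hrq
    rcases le_total (dist q (r q)) 1 with h | h
    exacts [hz' r ⟨hr, h⟩ hrq, hz.trans_le h]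
  filter_upwards [hball] with z hz r hr hrq
  have hclose := hz r hr hrq
  have htri := dist_triangle_left q (r q) z
  constructor
  · intro hzz
    have hzq := (hR.isHyperplaneReflection r hr).dist_apply_left z q
    rw [hzz] at hzq
    linarith
  · rw [Separates, dist_comm q z, dist_comm (r q) z]
    linarith

theorem eventually_lineMap_not_separates (hR : IsReflectionArrangement R) (q w : V) :
    ∀ᶠ ε : ℝ in 𝓝[>] 0, ∀ r ∈ R, r q ≠ q →
      r (AffineMap.lineMap q w ε) ≠ AffineMap.lineMap q w ε ∧
        ¬Separates r q (AffineMap.lineMap q w ε) := by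
  have hlim : Tendsto (AffineMap.lineMap q w : ℝ → V) (𝓝[>] 0) (𝓝 q) := by
    have hcont : Continuous (AffineMap.lineMap q w : ℝ → V) := AffineMap.lineMap_continuous
    simpa using (hcont.tendsto 0).mono_left nhdsWithin_le_nhds
  exact hlim.eventually (hR.eventually_not_separates q)

theorem exists_forall_fixing_apply_ne (hR : IsReflectionArrangement R) (q : V) :
    ∃ w, ∀ r ∈ R, r q = q → r w ≠ w := by
  have hfin : {r ∈ R | r q = q}.Finite :=
    (hR.finite_setOf_dist_le q 0).subset fun r hr => ⟨hr.1, by rw [hr.2, dist_self]⟩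
  have := hfin.to_subtype
  choose n h hnh using fun r : {r ∈ R | r q = q} => hR.isHyperplaneReflection r r.2.1
  obtain ⟨u, hu⟩ := Module.Dual.exists_forall_ne_zero_of_forall_exists (fun r => (h r).linear)
    fun r => ⟨n r, by rw [(hnh r).linear_normal]; exact two_ne_zero⟩
  refine ⟨u +ᵥ q, fun r hr hrq hru => hu ⟨r, hr, hrq⟩ ?_⟩
  have hr' := hnh ⟨r, hr, hrq⟩
  rwa [hr'.apply_eq_self_iff, AffineMap.map_vadd, hr'.apply_eq_self_iff.mp hrq, vadd_eq_add,
    add_zero] at hru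

theorem exists_isRegularPoint_mem_closedChamber (hR : IsReflectionArrangement R) (q : V) :
    ∃ p, IsRegularPoint R p ∧ q ∈ closedChamber R p := by
  obtain ⟨w, hw⟩ := hR.exists_forall_fixing_apply_ne q
  obtain ⟨ε, hfar, hε⟩ :=
    ((hR.eventually_lineMap_not_separates q w).and self_mem_nhdsWithin).exists
  refine ⟨AffineMap.lineMap q w ε, fun r hr hrp => ?_, fun r hr h => ?_⟩ <;>
    have hrr := hR.isHyperplaneReflection r hr <;> by_cases hrq : r q = q
  · rw [AffineEquiv.apply_lineMap, hrq] at hrp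
    exact hw r hr hrq (lineMap_right_injective q hε.ne' hrp)
  · exact (hfar r hr hrq).1 hrp
  · exact (hrr.separates_comm.mp h).apply_left_ne hrq
  · exact (hfar r hr hrq).2 (hrr.separates_comm.mp h)

theorem apply_eq_self_of_forall_not_separates (hR : IsReflectionArrangement R) {g : V ≃ᵃ[ℝ] V}
    (hg : g ∈ Subgroup.closure R) {x : V} (hx : ∀ r ∈ R, ¬Separates r x (g x)) : g x = x := by
  obtain ⟨p, hp, hq⟩ := hR.exists_isRegularPoint_mem_closedChamber (midpoint ℝ x (g x))
  obtain ⟨l, hl, rfl⟩ := hR.exists_list_isSimpleReflection p hg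
  refine (hR.eq_of_list_prod_apply_eq hp (x := x) (fun r hr h => ?_) (fun r hr h => ?_) hl rfl).symm
  · exact hq r hr ((hR.isHyperplaneReflection r hr).separates_midpoint h (hx r hr))
  · rw [midpoint_comm] at hq
    have hrr := hR.isHyperplaneReflection r hr
    exact hq r hr (hrr.separates_midpoint h (hrr.separates_comm.not.mp (hx r hr)))

theorem apply_eq_self_of_forall_fixing_not_separates (hR : IsReflectionArrangement R)
    {g : V ≃ᵃ[ℝ] V} (hg : g ∈ Subgroup.closure R) {v x : V} (hv : g v = v)
    (hx : ∀ r ∈ R, r v = v → ¬Separates r x (g x)) : g x = x := by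
  have hg_line (ε : ℝ) : g (AffineMap.lineMap v x ε) = AffineMap.lineMap v (g x) ε := by
    rw [AffineEquiv.apply_lineMap, hv]
  obtain ⟨ε, ⟨hx_far, hgx_far⟩, hε⟩ := ((hR.eventually_lineMap_not_separates v x).and
    (hR.eventually_lineMap_not_separates v (g x))).and self_mem_nhdsWithin |>.exists
  suffices hfix : g (AffineMap.lineMap v x ε) = AffineMap.lineMap v x ε by
    rw [hg_line] at hfix
    exact lineMap_right_injective v hε.ne' hfix
  refine hR.apply_eq_self_of_forall_not_separates hg fun r hr h => ?_
  have hrr := hR.isHyperplaneReflection r hr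
  rw [hg_line] at h
  by_cases hrv : r v = v
  · exact hx r hr hrv ((hrr.separates_lineMap_iff hrv hε).mp h)
  · have hxv := hrr.separates_comm.not.mp (hx_far r hr hrv).2
    exact (hgx_far r hr hrv).2 (hrr.separates_of_not_separates h hxv hrv)

end IsReflectionArrangement

end Reflections
section RootSystems

variable {V : Type*} [AddCommGroup V] [Module ℝ V]

/-- A finite crystallographic root system, not necessarily reduced, in the dual of `V`. The coroot
of `α ∈ Φ` is `cor α`; the values of `cor` outside `Φ` are junk. -/
structure IsCrystallographicRootSystem (Φ : Finset (V →ₗ[ℝ] ℝ)) (cor : (V →ₗ[ℝ] ℝ) → V) :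
    Prop where
  span_eq_top : Submodule.span ℝ (Φ : Set (V →ₗ[ℝ] ℝ)) = ⊤
  apply_coroot : ∀ α ∈ Φ, α (cor α) = 2
  exists_int : ∀ α ∈ Φ, ∀ β ∈ Φ, ∃ m : ℤ, β (cor α) = m
  sub_smul_mem : ∀ α ∈ Φ, ∀ β ∈ Φ, β - β (cor α) • α ∈ Φ

/-- The affine reflections `s_{α,m}`, which generate the affine Weyl group. -/
def affineReflections (Φ : Finset (V →ₗ[ℝ] ℝ)) (cor : (V →ₗ[ℝ] ℝ) → V) : Set (V ≃ᵃ[ℝ] V) :=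
  {g | ∃ α ∈ Φ, ∃ m : ℤ, ∀ x, g x = x - (α x + (m : ℝ)) • cor α}

/-- The affine function `α + m`, for a root `α`. -/
def affineRoot (α : V →ₗ[ℝ] ℝ) (m : ℤ) : V →ᵃ[ℝ] ℝ :=
  α.toAffineMap + AffineMap.const ℝ V (m : ℝ)

theorem affineRoot_linear (α : V →ₗ[ℝ] ℝ) (m : ℤ) : (affineRoot α m).linear = α := by
  rw [affineRoot, AffineMap.add_linear, AffineMap.const_linear, add_zero,
    LinearMap.toAffineMap_linear]

theorem eq_zero_of_forall_apply_eq_zero {Φ : Finset (V →ₗ[ℝ] ℝ)}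
    (hspan : Submodule.span ℝ (Φ : Set (V →ₗ[ℝ] ℝ)) = ⊤) {x : V} (hx : ∀ α ∈ Φ, α x = 0) :
    x = 0 := by
  have hle : Submodule.span ℝ (Φ : Set (V →ₗ[ℝ] ℝ)) ≤ LinearMap.ker (Module.Dual.eval ℝ V x) :=
    Submodule.span_le.mpr hx
  rw [hspan] at hle
  exact (Module.forall_dual_apply_eq_zero_iff ℝ x).mp fun f => hle (Submodule.mem_top (x := f))

/-- The inner product `∑ α ∈ Φ, α x * α y`, defined for every finite set `Φ` spanning the dual. For
a root system it is invariant under the Weyl group. -/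
@[reducible]
def rootInnerCore (Φ : Finset (V →ₗ[ℝ] ℝ))
    (hspan : Submodule.span ℝ (Φ : Set (V →ₗ[ℝ] ℝ)) = ⊤) : InnerProductSpace.Core ℝ V where
  inner x y := ∑ α ∈ Φ, α x * α y
  conj_inner_symm x y := by simp only [mul_comm, conj_trivial]
  re_inner_nonneg x := Finset.sum_nonneg fun α _ => mul_self_nonneg (α x)
  add_left x y z := by simp only [map_add, add_mul, Finset.sum_add_distrib]
  smul_left x y c := by
    simp only [map_smul, smul_eq_mul, mul_assoc, Finset.mul_sum, conj_trivial]
  definite x hx := by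
    rw [Finset.sum_eq_zero_iff_of_nonneg fun α _ => mul_self_nonneg (α x)] at hx
    exact eq_zero_of_forall_apply_eq_zero hspan fun α hα => mul_self_eq_zero.mp (hx α hα)

namespace IsCrystallographicRootSystem

variable {Φ : Finset (V →ₗ[ℝ] ℝ)} {cor : (V →ₗ[ℝ] ℝ) → V}

theorem finiteDimensional (hΦ : IsCrystallographicRootSystem Φ cor) : FiniteDimensional ℝ V := by
  have : FiniteDimensional ℝ (Module.Dual ℝ V) := ⟨⟨Φ, hΦ.span_eq_top⟩⟩
  exact (Module.finite_dual_iff ℝ).mp this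

theorem coroot_ne_zero (hΦ : IsCrystallographicRootSystem Φ cor) {α : V →ₗ[ℝ] ℝ} (hα : α ∈ Φ) :
    cor α ≠ 0 := by
  intro h0
  have h2 := hΦ.apply_coroot α hα
  rw [h0, map_zero] at h2
  exact two_ne_zero h2.symm

theorem sub_smul_apply_coroot (hΦ : IsCrystallographicRootSystem Φ cor) {β : V →ₗ[ℝ] ℝ}
    (hβ : β ∈ Φ) (α : V →ₗ[ℝ] ℝ) : (α - α (cor β) • β) (cor β) = -α (cor β) := by
  rw [LinearMap.sub_apply, LinearMap.smul_apply, hΦ.apply_coroot β hβ, smul_eq_mul]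
  ring

theorem sub_smul_sub_smul (hΦ : IsCrystallographicRootSystem Φ cor) {β : V →ₗ[ℝ] ℝ} (hβ : β ∈ Φ)
    (α : V →ₗ[ℝ] ℝ) :
    α - α (cor β) • β - (α - α (cor β) • β) (cor β) • β = α := by
  rw [hΦ.sub_smul_apply_coroot hβ]
  module

/-- The form `∑ α ∈ Φ, α x * α y` is invariant under the reflection in `β`, which permutes the
summands. -/
theorem two_mul_sum_apply_coroot_mul (hΦ : IsCrystallographicRootSystem Φ cor) {β : V →ₗ[ℝ] ℝ}
    (hβ : β ∈ Φ) (y : V) :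
    2 * ∑ α ∈ Φ, α (cor β) * α y = (∑ α ∈ Φ, α (cor β) * α (cor β)) * β y := by
  have hperm : ∑ α ∈ Φ, α (cor β) * α y =
      ∑ α ∈ Φ, -α (cor β) * (α y - α (cor β) * β y) := by
    refine Finset.sum_nbij' (fun α => α - α (cor β) • β) (fun α => α - α (cor β) • β)
      (hΦ.sub_smul_mem β hβ) (hΦ.sub_smul_mem β hβ) (fun α _ => hΦ.sub_smul_sub_smul hβ α)
      (fun α _ => hΦ.sub_smul_sub_smul hβ α) fun α _ => ?_
    simp only [hΦ.sub_smul_apply_coroot hβ, LinearMap.sub_apply, LinearMap.smul_apply, smul_eq_mul]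
    ring
  rw [two_mul]
  nth_rewrite 2 [hperm]
  rw [← Finset.sum_add_distrib, Finset.sum_mul]
  exact Finset.sum_congr rfl fun α _ => by ring

theorem coroot_sub_smul (hΦ : IsCrystallographicRootSystem Φ cor) {α β : V →ₗ[ℝ] ℝ}
    (hα : α ∈ Φ) (hβ : β ∈ Φ) :
    cor (α - α (cor β) • β) = cor α - β (cor α) • cor β := by
  have hγ := hΦ.sub_smul_mem β hβ α hα
  set γ := α - α (cor β) • β
  suffices heval : Module.Dual.eval ℝ V (cor γ) =
      Module.Dual.eval ℝ V (cor α - β (cor α) • cor β) from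
    Module.eval_apply_injective ℝ heval
  refine Module.Dual.eq_of_preReflection_mapsTo (x := γ) Φ.finite_toSet hΦ.span_eq_top
    (hΦ.apply_coroot γ hγ) (hΦ.sub_smul_mem γ hγ) ?_ fun δ hδ => ?_
  · rw [Module.Dual.eval_apply, map_sub, map_smul, hΦ.sub_smul_apply_coroot hβ]
    simp only [γ, LinearMap.sub_apply, LinearMap.smul_apply, hΦ.apply_coroot α hα, smul_eq_mul]
    ring
  · have hδ₁ := hΦ.sub_smul_mem β hβ δ hδ
    have hδ₂ := hΦ.sub_smul_mem β hβ _ (hΦ.sub_smul_mem α hα _ hδ₁)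
    convert Finset.mem_coe.mpr hδ₂ using 1
    rw [Module.preReflection_apply, Module.Dual.eval_apply]
    simp only [γ, LinearMap.sub_apply, LinearMap.smul_apply, hΦ.apply_coroot β hβ, smul_eq_mul,
      map_sub, map_smul]
    module

theorem mul_mul_mem_affineReflections (hΦ : IsCrystallographicRootSystem Φ cor) {r s : V ≃ᵃ[ℝ] V}
    (hr : r ∈ affineReflections Φ cor) (hs : s ∈ affineReflections Φ cor) :
    s * r * s ∈ affineReflections Φ cor := by
  obtain ⟨α, hα, m, hr⟩ := hr
  obtain ⟨β, hβ, k, hs⟩ := hs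
  obtain ⟨c, hc⟩ := hΦ.exists_int β hβ α hα
  refine ⟨α - α (cor β) • β, hΦ.sub_smul_mem β hβ α hα, m - k * c, fun x => ?_⟩
  rw [hΦ.coroot_sub_smul hα hβ, AffineEquiv.coe_mul, AffineEquiv.coe_mul, Function.comp_apply,
    Function.comp_apply]
  simp only [hr, hs, hc, map_sub, map_smul, LinearMap.sub_apply, LinearMap.smul_apply, smul_eq_mul,
    hΦ.apply_coroot β hβ, Int.cast_sub, Int.cast_mul]
  module

end IsCrystallographicRootSystem

end RootSystems

theorem IsCrystallographicRootSystem.finite_setOf_dist_apply_le {Φ : Finset (A →ₗ[ℝ] ℝ)}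
    {cor : (A →ₗ[ℝ] ℝ) → A} (hΦ : IsCrystallographicRootSystem Φ cor) (p : A) (d : ℝ) :
    {g ∈ affineReflections Φ cor | dist p (g p) ≤ d}.Finite := by
  have hfin (α : A →ₗ[ℝ] ℝ) : {m : ℤ | |α p + m| ≤ d / ‖cor α‖}.Finite := by
    refine (Set.finite_Icc ⌈-(d / ‖cor α‖) - α p⌉ ⌊d / ‖cor α‖ - α p⌋).subset fun m hm => ?_
    rw [Set.mem_ofPred_eq, abs_le] at hm
    exact ⟨Int.ceil_le.mpr (by linarith), Int.le_floor.mpr (by linarith)⟩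
  have hsub (α : A →ₗ[ℝ] ℝ) (m : ℤ) :
      {g : A ≃ᵃ[ℝ] A | ∀ x, g x = x - (α x + m) • cor α}.Subsingleton :=
    fun g hg g' hg' => AffineEquiv.ext fun x => (hg x).trans (hg' x).symm
  refine (Φ.finite_toSet.biUnion fun α _ => (hfin α).biUnion fun m _ => (hsub α m).finite).subset ?_
  rintro g ⟨⟨α, hα, m, hg⟩, hd⟩
  refine Set.mem_biUnion hα (Set.mem_biUnion ?_ hg)
  have hcor : cor α ≠ 0 := hΦ.coroot_ne_zero hα
  rwa [Set.mem_ofPred_eq, le_div_iff₀ (norm_pos_iff.mpr hcor), ← Real.norm_eq_abs, ← norm_smul,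
    ← sub_sub_cancel p ((α p + m) • cor α), ← hg, ← dist_eq_norm]

section InvariantInnerProduct

open scoped RealInnerProductSpace

variable {V : Type*} [NormedAddCommGroup V] [InnerProductSpace ℝ V]
  {Φ : Finset (V →ₗ[ℝ] ℝ)} {cor : (V →ₗ[ℝ] ℝ) → V}

namespace IsCrystallographicRootSystem

theorem isReflectionAlong (hΦ : IsCrystallographicRootSystem Φ cor)
    (hinner : ∀ x y : V, ⟪x, y⟫ = ∑ α ∈ Φ, α x * α y) {g : V ≃ᵃ[ℝ] V} {α : V →ₗ[ℝ] ℝ} (hα : α ∈ Φ)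
    {m : ℤ} (hg : ∀ x, g x = x - (α x + m) • cor α) :
    IsReflectionAlong g (cor α) (affineRoot α m) where
  normal_ne_zero := hΦ.coroot_ne_zero hα
  two_mul_inner_normal y := by
    rw [← real_inner_self_eq_norm_sq, hinner, hinner, affineRoot_linear,
      hΦ.two_mul_sum_apply_coroot_mul hα]
  apply_eq := hg

theorem isReflectionArrangement (hΦ : IsCrystallographicRootSystem Φ cor)
    (hinner : ∀ x y : V, ⟪x, y⟫ = ∑ α ∈ Φ, α x * α y) :
    IsReflectionArrangement (affineReflections Φ cor) := by
  have hrefl : ∀ r ∈ affineReflections Φ cor, IsHyperplaneReflection r := by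
    rintro r ⟨α, hα, m, hr⟩
    exact ⟨_, _, hΦ.isReflectionAlong hinner hα hr⟩
  refine ⟨hrefl, fun r hr s hs => ?_, hΦ.finite_setOf_dist_apply_le⟩
  rw [(hrefl s hs).inv_eq]
  exact hΦ.mul_mul_mem_affineReflections hr hs

end IsCrystallographicRootSystem

end InvariantInnerProduct

section AffineWeylGroup

variable {V : Type*} [AddCommGroup V] [Module ℝ V]
  {Φ : Finset (V →ₗ[ℝ] ℝ)} {cor : (V →ₗ[ℝ] ℝ) → V}

namespace IsCrystallographicRootSystem

theorem apply_eq_self_of_forall_mul_nonneg (hΦ : IsCrystallographicRootSystem Φ cor)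
    {g : V ≃ᵃ[ℝ] V} (hg : g ∈ Subgroup.closure (affineReflections Φ cor)) {x : V}
    (hx : ∀ α ∈ Φ, ∀ m : ℤ, 0 ≤ (α x + m) * (α (g x) + m)) : g x = x := by
  let core := rootInnerCore Φ hΦ.span_eq_top
  let := core.toNormedAddCommGroup
  let := InnerProductSpace.ofCore core.toCore
  have hinner : ∀ x y : V, inner ℝ x y = ∑ α ∈ Φ, α x * α y := fun _ _ => rfl
  refine (hΦ.isReflectionArrangement hinner).apply_eq_self_of_forall_not_separates hg ?_
  rintro r ⟨α, hα, m, hr⟩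
  rw [(hΦ.isReflectionAlong hinner hα hr).separates_iff]
  exact (hx α hα m).not_gt

theorem apply_eq_self_of_forall_mem_wall_mul_nonneg (hΦ : IsCrystallographicRootSystem Φ cor)
    {g : V ≃ᵃ[ℝ] V} (hg : g ∈ Subgroup.closure (affineReflections Φ cor)) {v x : V} (hv : g v = v)
    (hx : ∀ α ∈ Φ, ∀ m : ℤ, α v + m = 0 → 0 ≤ (α x + m) * (α (g x) + m)) : g x = x := by
  let core := rootInnerCore Φ hΦ.span_eq_top
  let := core.toNormedAddCommGroup
  let := InnerProductSpace.ofCore core.toCore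
  have hinner : ∀ x y : V, inner ℝ x y = ∑ α ∈ Φ, α x * α y := fun _ _ => rfl
  refine (hΦ.isReflectionArrangement hinner).apply_eq_self_of_forall_fixing_not_separates hg hv ?_
  rintro r ⟨α, hα, m, hr⟩ hrv
  have hr' := hΦ.isReflectionAlong hinner hα hr
  rw [hr'.separates_iff]
  exact (hx α hα m (hr'.apply_eq_self_iff.mp hrv)).not_gt

end IsCrystallographicRootSystem

end AffineWeylGroup

section Apartment

theorem IsFace.mul_apply_nonneg {Φ pos : Finset (A →ₗ[ℝ] ℝ)} (hsplit : ∀ α ∈ Φ, α ∈ pos ∨ -α ∈ pos)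
    {F : Set A} (hF : IsFace pos F) {x y : A} (hx : x ∈ F) (hy : y ∈ F) {α : A →ₗ[ℝ] ℝ}
    (hα : α ∈ Φ) (m : ℤ) : 0 ≤ (α x + m) * (α y + m) := by
  obtain ⟨-, σ, rfl⟩ := hF
  have hpos : ∀ β ∈ pos, ∀ k : ℤ, 0 ≤ (β x + k) * (β y + k) := by
    intro β hβ k
    have hx' := Set.mem_iInter.mp (Set.mem_iInter₂.mp hx β hβ) k
    have hy' := Set.mem_iInter.mp (Set.mem_iInter₂.mp hy β hβ) k
    rw [halfChoice] at hx' hy'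
    split_ifs at hx' hy'
    · exact (mul_eq_zero_of_left hx' _).ge
    · exact mul_nonneg hx' hy'
    · exact mul_nonneg_of_nonpos_of_nonpos hx' hy'
  rcases hsplit α hα with hα | hα
  · exact hpos α hα m
  · have hneg := hpos (-α) hα (-m)
    simp only [LinearMap.neg_apply, Int.cast_neg] at hneg
    linarith

theorem IsVertexFace.exists_eq_singleton [FiniteDimensional ℝ A] {pos : Finset (A →ₗ[ℝ] ℝ)}
    {F : Set A} (hF : IsVertexFace pos F) : ∃ v, F = {v} := by
  have hdim := hF.2
  rw [faceDim, Submodule.finrank_eq_zero, direction_affineSpan,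
    vectorSpan_eq_bot_iff_subsingleton] at hdim
  exact Set.exists_eq_singleton_iff_nonempty_subsingleton.mpr ⟨hF.1.1, hdim⟩

theorem mul_apply_pos_of_mem_connectedComponentIn {Φ : Finset (A →ₗ[ℝ] ℝ)} {x y z : A}
    (hx : x ∈ connectedComponentIn (wallsSet Φ)ᶜ z) (hy : y ∈ connectedComponentIn (wallsSet Φ)ᶜ z)
    {α : A →ₗ[ℝ] ℝ} (hα : α ∈ Φ) (hcont : Continuous α) : 0 < α x * α y := by
  have hne : ∀ w ∈ connectedComponentIn (wallsSet Φ)ᶜ z, α w ≠ 0 := fun w hw hαw =>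
    connectedComponentIn_subset _ _ hw (Set.mem_biUnion hα hαw)
  have hIcc {a b : A} (ha : a ∈ connectedComponentIn (wallsSet Φ)ᶜ z)
      (hb : b ∈ connectedComponentIn (wallsSet Φ)ᶜ z) : (0 : ℝ) ∉ Set.Icc (α a) (α b) := by
    intro h0
    obtain ⟨w, hw, hαw⟩ :=
      isPreconnected_connectedComponentIn.intermediate_value ha hb hcont.continuousOn h0
    exact hne w hw hαw
  by_contra! hle
  rcases mul_nonpos_iff.mp hle with h | h
  exacts [hIcc hy hx h.symm, hIcc hx hy h]

theorem IsWeylChamber.mul_apply_nonneg {Φ : Finset (A →ₗ[ℝ] ℝ)} {C : Set A}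
    (hC : IsWeylChamber Φ C) {x y : A} (hx : x ∈ C) (hy : y ∈ C) {α : A →ₗ[ℝ] ℝ} (hα : α ∈ Φ)
    (hcont : Continuous α) : 0 ≤ α x * α y := by
  obtain ⟨z, -, rfl⟩ := hC
  have hmem : α x * α y ∈ closure (Set.Ici 0) :=
    map_mem_closure₂ (f := fun a b => α a * α b) (by fun_prop) hx hy fun a ha b hb =>
      (mul_apply_pos_of_mem_connectedComponentIn ha hb hα hcont).le
  rwa [isClosed_Ici.closure_eq] at hmem

theorem statement8_general (Φ pos : Finset (A →ₗ[ℝ] ℝ)) (cor : (A →ₗ[ℝ] ℝ) → A)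
    (hΦ : IsCrystallographicRootSystem Φ cor) (hsplit : ∀ α ∈ Φ, α ∈ pos ∨ -α ∈ pos)
    (v : A) (E E' C : Set A) (hE' : IsFace pos E') (hvE : v ∈ E) (hvE' : v ∈ E')
    (hC : IsWeylChamber Φ C) (hEC : E ⊆ {v} + C) (hE'C : E' ⊆ {v} + C)
    (hsame : SameType Φ cor E E') : E = E' := by
  rw [Set.singleton_add] at hEC hE'C
  have := hΦ.finiteDimensional
  obtain ⟨g, hg, rfl⟩ := hsame
  have hgv : g v = v := hΦ.apply_eq_self_of_forall_mul_nonneg hg fun α hα m =>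
    hE'.mul_apply_nonneg hsplit hvE' (Set.mem_image_of_mem g hvE) hα m
  have hgE : ∀ x ∈ E, g x = x := by
    intro x hx
    obtain ⟨a, ha, hax⟩ := hEC hx
    obtain ⟨b, hb, hbx⟩ := hE'C (Set.mem_image_of_mem g hx)
    refine hΦ.apply_eq_self_of_forall_mem_wall_mul_nonneg hg hgv fun α hα m hm => ?_
    have hwall (c : A) : α (v + c) + m = α c := by
      rw [map_add, add_right_comm, hm, zero_add]
    rw [← hbx, ← hax]
    simpa only [hwall] using hC.mul_apply_nonneg ha hb hα α.continuous_of_finiteDimensional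
  rw [Set.image_congr hgE, Set.image_id']

end Apartment

/-- A sector contains at most one edge of each type emanating from its vertex:
if `E, E'` are edges containing a vertex `V`, both contained in the sector `V + C` for a closed
Weyl chamber `C`, and `E` and `E'` have the same type, then `E = E'`. -/
theorem statement8 {A : Type*} [NormedAddCommGroup A] [NormedSpace ℝ A]
    [FiniteDimensional ℝ A]
    (Φ pos : Finset (A →ₗ[ℝ] ℝ)) (cor : (A →ₗ[ℝ] ℝ) → A)
    -- `Φ` is a finite crystallographic root system of linear functionals spanning the dual,
    -- with positive system `pos` and coroots `cor`:
    (hne : ∀ α ∈ Φ, α ≠ (0 : A →ₗ[ℝ] ℝ))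
    (hspan : Submodule.span ℝ (Φ : Set (A →ₗ[ℝ] ℝ)) = ⊤)
    (hpos : pos ⊆ Φ)
    (hsplit : ∀ α ∈ Φ, α ∈ pos ∨ -α ∈ pos)
    (hnotboth : ∀ α ∈ pos, -α ∉ pos)
    (hcor : ∀ α ∈ Φ, α (cor α) = 2)
    (hcrys : ∀ α ∈ Φ, ∀ β ∈ Φ, ∃ m : ℤ, β (cor α) = (m : ℝ))
    (hinv : ∀ α ∈ Φ, ∀ β ∈ Φ, β - β (cor α) • α ∈ Φ)
    -- a vertex `V`, a closed Weyl chamber `C` and two edges `E, E'` with `V ⊆ E`, `V ⊆ E'`,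
    -- both contained in the sector `V + C`:
    (Vf E E' : Set A)
    (hV : IsVertexFace pos Vf)
    (hE : IsEdgeFace pos E) (hE' : IsEdgeFace pos E')
    (hVE : Vf ⊆ E) (hVE' : Vf ⊆ E')
    (C : Set A) (hC : IsWeylChamber Φ C)
    (hEC : E ⊆ Vf + C) (hE'C : E' ⊆ Vf + C)
    -- if `E` and `E'` have the same type, then they are equal:
    (hsame : SameType Φ cor E E') :
    E = E' := by
  obtain ⟨v, rfl⟩ := hV.exists_eq_singleton
  exact statement8_general Φ pos cor ⟨hspan, hcor, hcrys, hinv⟩ hsplit v E E' C hE'.1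
    (hVE rfl) (hVE' rfl) hC hEC hE'C hsame
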